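/- (Theorem 2.1) The position vector of M satisfies Δ^{II} x = λ x on U for some real λ ≠ 0 if and only if M is part of a sphere centered at the origin, i.e. there is r > 0 with ‖x(u)‖ = r for all u ∈ U (and then necessarily λ = 2/r, n = −x/r); moreover in this case the Gauss curvature K is constant on U. -/

import Mathlib

open Matrix

noncomputable section

/-- The parameter domain `ℝ²`. -/
abbrev Param : Type := Fin 2 → ℝ

/-- Vectors in Euclidean 3-space. -/
abbrev Vec3 : Type := Fin 3 → ℝ

/-- Partial derivative of a vector-valued function in the `i`-th coordinate direction. -/
noncomputable def pd (i : Fin 2) (f : Param → Vec3) (u : Param) : Vec3 :=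
  fderiv ℝ f u (Pi.single i 1)

/-- Partial derivative of a scalar function in the `i`-th coordinate direction. -/
noncomputable def pds (i : Fin 2) (f : Param → ℝ) (u : Param) : ℝ :=
  fderiv ℝ f u (Pi.single i 1)

/-- The Euclidean inner product on `ℝ³`. -/
def dot3 (a b : Vec3) : ℝ := ∑ k, a k * b k

/-- The Euclidean norm on `ℝ³`. -/
noncomputable def norm3 (a : Vec3) : ℝ := Real.sqrt (dot3 a a)

/-- The Gauss map `n = (x_{/1} × x_{/2}) / ‖x_{/1} × x_{/2}‖`. -/
noncomputable def gaussMap (x : Param → Vec3) (u : Param) : Vec3 :=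
  (norm3 (crossProduct (pd 0 x u) (pd 1 x u)))⁻¹ • crossProduct (pd 0 x u) (pd 1 x u)

/-- Components `g_{ij}` of the first fundamental form. -/
noncomputable def fformI (x : Param → Vec3) (u : Param) : Matrix (Fin 2) (Fin 2) ℝ :=
  Matrix.of fun i j => dot3 (pd i x u) (pd j x u)

/-- Components `b_{ij} = ⟨∂²x/∂u^i∂u^j, n⟩` of the second fundamental form. -/
noncomputable def fformII (x : Param → Vec3) (u : Param) : Matrix (Fin 2) (Fin 2) ℝ :=
  Matrix.of fun i j => dot3 (pd i (pd j x) u) (gaussMap x u)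

/-- Components `e_{ij} = ⟨n_{/i}, n_{/j}⟩` of the third fundamental form. -/
noncomputable def fformIII (x : Param → Vec3) (u : Param) : Matrix (Fin 2) (Fin 2) ℝ :=
  Matrix.of fun i j => dot3 (pd i (gaussMap x) u) (pd j (gaussMap x) u)

/-- The Gauss curvature `K = det(b_{ij}) / det(g_{ij})`. -/
noncomputable def gaussCurv (x : Param → Vec3) (u : Param) : ℝ :=
  (fformII x u).det / (fformI x u).det

/-- The mean curvature `H = (1/2) g^{ij} b_{ij}`. -/
noncomputable def meanCurv (x : Param → Vec3) (u : Param) : ℝ :=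
  (1 / 2) * ∑ i, ∑ j, (fformI x u)⁻¹ i j * fformII x u i j

/-- First Beltrami operator `∇^J(φ, ψ) = a^{ij} φ_{/i} ψ_{/j}` with respect to the
fundamental form with component matrix `a`, for scalar `φ` and `ℝ³`-valued `ψ`. -/
noncomputable def beltrami1 (a : Param → Matrix (Fin 2) (Fin 2) ℝ)
    (φ : Param → ℝ) (ψ : Param → Vec3) (u : Param) : Vec3 :=
  ∑ i, ∑ j, ((a u)⁻¹ i j * pds i φ u) • pd j ψ u

/-- Second Beltrami operator
`Δ^J f = −(1/√|det a|) ∂_i (√|det a| a^{ij} ∂_j f)` with respect to the fundamental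
form with component matrix `a`, acting componentwise on `ℝ³`-valued functions. -/
noncomputable def beltrami2 (a : Param → Matrix (Fin 2) (Fin 2) ℝ)
    (f : Param → Vec3) (u : Param) : Vec3 :=
  -((Real.sqrt |(a u).det|)⁻¹ •
    ∑ i, ∑ j, pd i (fun v => (Real.sqrt |(a v).det| * (a v)⁻¹ i j) • pd j f v) u)

/-- `x` is an immersion on `U`: the partial derivatives are linearly independent. -/
def Immersed (x : Param → Vec3) (U : Set Param) : Prop :=
  ∀ u ∈ U, LinearIndependent ℝ ![pd 0 x u, pd 1 x u]

/-- `f` is nonconstant on `U`. -/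
def NonconstOn (f : Param → Vec3) (U : Set Param) : Prop :=
  ¬ ∃ v : Vec3, ∀ u ∈ U, f u = v

open scoped ContDiff

lemma dot3_eq (a b : Vec3) : dot3 a b = a 0 * b 0 + a 1 * b 1 + a 2 * b 2 := by
  simp [dot3, Fin.sum_univ_three]

lemma dot3_comm (a b : Vec3) : dot3 a b = dot3 b a := by
  simp only [dot3_eq]; ring

lemma dot3_self_pos {a : Vec3} (h : a ≠ 0) : 0 < dot3 a a := by
  rw [dot3_eq]
  by_contra hc
  apply h
  have h0 : a 0 = 0 := by nlinarith [sq_nonneg (a 0), sq_nonneg (a 1), sq_nonneg (a 2)]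
  have h1 : a 1 = 0 := by nlinarith [sq_nonneg (a 0), sq_nonneg (a 1), sq_nonneg (a 2)]
  have h2 : a 2 = 0 := by nlinarith [sq_nonneg (a 0), sq_nonneg (a 1), sq_nonneg (a 2)]
  ext k; fin_cases k <;> simp [h0, h1, h2]

lemma pd_apply (i : Fin 2) (f : Param → Vec3) (u : Param) (hf : DifferentiableAt ℝ f u)
    (k : Fin 3) : pd i f u k = pds i (fun v => f v k) u := by
  have := hasFDerivAt_pi'.1 hf.hasFDerivAt k
  simp only [pd, pds]
  rw [this.fderiv]; rfl

lemma diff_comp {f : Param → Vec3} {u : Param} (hf : DifferentiableAt ℝ f u) (k : Fin 3) :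
    DifferentiableAt ℝ (fun v => f v k) u := differentiableAt_pi.1 hf k

lemma pds_mul (i : Fin 2) {f g : Param → ℝ} {u : Param} (hf : DifferentiableAt ℝ f u)
    (hg : DifferentiableAt ℝ g u) :
    pds i (fun v => f v * g v) u = f u * pds i g u + pds i f u * g u := by
  simp only [pds]
  rw [fderiv_fun_mul hf hg]; simp; ring

lemma pds_add (i : Fin 2) {f g : Param → ℝ} {u : Param} (hf : DifferentiableAt ℝ f u)
    (hg : DifferentiableAt ℝ g u) :
    pds i (fun v => f v + g v) u = pds i f u + pds i g u := by
  simp only [pds]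
  rw [fderiv_fun_add hf hg]; simp

lemma pds_sub (i : Fin 2) {f g : Param → ℝ} {u : Param} (hf : DifferentiableAt ℝ f u)
    (hg : DifferentiableAt ℝ g u) :
    pds i (fun v => f v - g v) u = pds i f u - pds i g u := by
  simp only [pds]
  rw [fderiv_fun_sub hf hg]; simp

lemma pd_add (i : Fin 2) {f g : Param → Vec3} {u : Param} (hf : DifferentiableAt ℝ f u)
    (hg : DifferentiableAt ℝ g u) :
    pd i (fun v => f v + g v) u = pd i f u + pd i g u := by
  simp only [pd]
  rw [fderiv_fun_add hf hg]; simp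

lemma pd_smul (i : Fin 2) {c : Param → ℝ} {f : Param → Vec3} {u : Param}
    (hc : DifferentiableAt ℝ c u) (hf : DifferentiableAt ℝ f u) :
    pd i (fun v => c v • f v) u = c u • pd i f u + pds i c u • f u := by
  simp only [pd, pds]
  rw [fderiv_fun_smul hc hf]; simp

lemma pd_const_smul (i : Fin 2) (c : ℝ) {f : Param → Vec3} {u : Param}
    (hf : DifferentiableAt ℝ f u) :
    pd i (fun v => c • f v) u = c • pd i f u := by
  simp only [pd]
  rw [fderiv_fun_const_smul hf]; simp

lemma pds_dot3 (i : Fin 2) {f g : Param → Vec3} {u : Param} (hf : DifferentiableAt ℝ f u)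
    (hg : DifferentiableAt ℝ g u) :
    pds i (fun v => dot3 (f v) (g v)) u = dot3 (pd i f u) (g u) + dot3 (f u) (pd i g u) := by
  have h1 := diff_comp hf
  have h2 := diff_comp hg
  have e : (fun v => dot3 (f v) (g v)) =
      fun v => f v 0 * g v 0 + f v 1 * g v 1 + f v 2 * g v 2 := by
    ext v; rw [dot3_eq]
  rw [e, pds_add i (((h1 0).fun_mul (h2 0)).fun_add ((h1 1).fun_mul (h2 1))) ((h1 2).fun_mul (h2 2)),
    pds_add i ((h1 0).fun_mul (h2 0)) ((h1 1).fun_mul (h2 1)),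
    pds_mul i (h1 0) (h2 0), pds_mul i (h1 1) (h2 1), pds_mul i (h1 2) (h2 2)]
  simp only [dot3_eq, pd_apply i f u hf, pd_apply i g u hg]
  ring

lemma pds_congr (i : Fin 2) {f g : Param → ℝ} {U : Set Param} (hU : IsOpen U)
    (h : ∀ u ∈ U, f u = g u) {u : Param} (hu : u ∈ U) : pds i f u = pds i g u := by
  simp only [pds]
  rw [Filter.EventuallyEq.fderiv_eq (Filter.eventually_of_mem (hU.mem_nhds hu) h)]

lemma pd_congr (i : Fin 2) {f g : Param → Vec3} {U : Set Param} (hU : IsOpen U)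
    (h : ∀ u ∈ U, f u = g u) {u : Param} (hu : u ∈ U) : pd i f u = pd i g u := by
  simp only [pd]
  rw [Filter.EventuallyEq.fderiv_eq (Filter.eventually_of_mem (hU.mem_nhds hu) h)]

lemma pds_const (i : Fin 2) (c : ℝ) (u : Param) : pds i (fun _ => c) u = 0 := by
  simp [pds]

lemma cross_0 (a b : Vec3) : crossProduct a b 0 = a 1 * b 2 - a 2 * b 1 := by
  simp [cross_apply]
lemma cross_1 (a b : Vec3) : crossProduct a b 1 = a 2 * b 0 - a 0 * b 2 := by
  simp [cross_apply]
lemma cross_2 (a b : Vec3) : crossProduct a b 2 = a 0 * b 1 - a 1 * b 0 := by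
  simp [cross_apply]

lemma contDiffAt_cross {f g : Param → Vec3} {u : Param} (hf : ContDiffAt ℝ ∞ f u)
    (hg : ContDiffAt ℝ ∞ g u) : ContDiffAt ℝ ∞ (fun v => crossProduct (f v) (g v)) u := by
  have h1 := contDiffAt_pi.1 hf
  have h2 := contDiffAt_pi.1 hg
  refine contDiffAt_pi.2 fun k => ?_
  fin_cases k
  · simp only [Fin.zero_eta, cross_0]
    exact ((h1 1).mul (h2 2)).sub ((h1 2).mul (h2 1))
  · simp only [Fin.mk_one, cross_1]
    exact ((h1 2).mul (h2 0)).sub ((h1 0).mul (h2 2))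
  · simp only [Fin.reduceFinMk, cross_2]
    exact ((h1 0).mul (h2 1)).sub ((h1 1).mul (h2 0))

lemma pd_cross (i : Fin 2) {f g : Param → Vec3} {u : Param} (hf : ContDiffAt ℝ ∞ f u)
    (hg : ContDiffAt ℝ ∞ g u) :
    pd i (fun v => crossProduct (f v) (g v)) u =
      crossProduct (pd i f u) (g u) + crossProduct (f u) (pd i g u) := by
  have df : DifferentiableAt ℝ f u := hf.differentiableAt (by simp)
  have dg : DifferentiableAt ℝ g u := hg.differentiableAt (by simp)
  have h1 := diff_comp df
  have h2 := diff_comp dg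
  ext k
  rw [pd_apply i _ u ((contDiffAt_cross hf hg).differentiableAt (by simp))]
  have key : ∀ a b : Fin 3, pds i (fun v => f v a * g v b - f v b * g v a) u =
      pd i f u a * g u b + f u a * pd i g u b - (pd i f u b * g u a + f u b * pd i g u a) := by
    intro a b
    rw [pds_sub i ((h1 a).fun_mul (h2 b)) ((h1 b).fun_mul (h2 a)), pds_mul i (h1 a) (h2 b),
      pds_mul i (h1 b) (h2 a)]
    simp only [pd_apply i f u df, pd_apply i g u dg]
    ring
  fin_cases k
  · simp only [Fin.zero_eta, cross_0, Pi.add_apply, key]; ring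
  · simp only [Fin.mk_one, cross_1, Pi.add_apply, key]; ring
  · simp only [Fin.reduceFinMk, cross_2, Pi.add_apply, key]; ring

lemma contDiffAt_pd (i : Fin 2) {f : Param → Vec3} {u : Param} (hf : ContDiffAt ℝ ∞ f u) :
    ContDiffAt ℝ ∞ (pd i f) u := by
  have : ContDiffAt ℝ ∞ (fderiv ℝ f) u := hf.fderiv_right (by simp)
  exact this.clm_apply contDiffAt_const

lemma pd_symm (i j : Fin 2) {f : Param → Vec3} {u : Param} (hf : ContDiffAt ℝ ∞ f u) :
    pd i (pd j f) u = pd j (pd i f) u := by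
  have hd : DifferentiableAt ℝ (fderiv ℝ f) u :=
    (hf.fderiv_right (m := ∞) (by simp)).differentiableAt (by simp)
  have hs : IsSymmSndFDerivAt ℝ f u := hf.isSymmSndFDerivAt (by simp only [minSmoothness_of_isRCLikeNormedField]; exact WithTop.coe_le_coe.2 (le_top : (2 : ℕ∞) ≤ ⊤))
  have key : ∀ a b : Fin 2, pd a (pd b f) u =
      fderiv ℝ (fderiv ℝ f) u (Pi.single a 1) (Pi.single b 1) := by
    intro a b
    have : pd b f = fun v => fderiv ℝ f v (Pi.single b 1) := rfl
    rw [this]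
    simp only [pd]
    rw [fderiv_clm_apply hd (differentiableAt_const _)]
    simp
  rw [key, key]; exact hs _ _

lemma contDiffAt_dot3 {f g : Param → Vec3} {u : Param} (hf : ContDiffAt ℝ ∞ f u)
    (hg : ContDiffAt ℝ ∞ g u) : ContDiffAt ℝ ∞ (fun v => dot3 (f v) (g v)) u := by
  have h1 := contDiffAt_pi.1 hf
  have h2 := contDiffAt_pi.1 hg
  simp only [dot3_eq]
  exact (((h1 0).mul (h2 0)).add ((h1 1).mul (h2 1))).add ((h1 2).mul (h2 2))

lemma cross_ne {a b : Vec3} (h : LinearIndependent ℝ ![a, b]) : crossProduct a b ≠ 0 :=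
  crossProduct_ne_zero_iff_linearIndependent.2 h

section pt
variable {x : Param → Vec3} {u : Param}

lemma norm3_pos {a : Vec3} (h : a ≠ 0) : 0 < norm3 a := Real.sqrt_pos.2 (dot3_self_pos h)

lemma norm3_sq (a : Vec3) : norm3 a ^ 2 = dot3 a a := by
  apply Real.sq_sqrt; rw [dot3_eq]; nlinarith [sq_nonneg (a 0), sq_nonneg (a 1), sq_nonneg (a 2)]

lemma dot3_smul_left (c : ℝ) (a b : Vec3) : dot3 (c • a) b = c * dot3 a b := by
  simp [dot3_eq]; ring
lemma dot3_smul_right (c : ℝ) (a b : Vec3) : dot3 a (c • b) = c * dot3 a b := by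
  simp [dot3_eq]; ring
lemma dot3_add_left (a a' b : Vec3) : dot3 (a + a') b = dot3 a b + dot3 a' b := by
  simp [dot3_eq]; ring
lemma dot3_neg_left (a b : Vec3) : dot3 (-a) b = -dot3 a b := by
  simp [dot3_eq]; ring
lemma dot3_neg_right (a b : Vec3) : dot3 a (-b) = -dot3 a b := by
  simp [dot3_eq]; ring

lemma gauss_smooth (hx : ContDiffAt ℝ ∞ x u) (h : LinearIndependent ℝ ![pd 0 x u, pd 1 x u]) :
    ContDiffAt ℝ ∞ (gaussMap x) u := by
  have hc := contDiffAt_cross (contDiffAt_pd 0 hx) (contDiffAt_pd 1 hx)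
  have hn := cross_ne h
  have : ContDiffAt ℝ ∞ (fun v => norm3 (crossProduct (pd 0 x v) (pd 1 x v))) u :=
    (contDiffAt_dot3 hc hc).sqrt (dot3_self_pos hn).ne'
  exact (this.inv (norm3_pos hn).ne').smul hc

lemma gauss_unit (h : LinearIndependent ℝ ![pd 0 x u, pd 1 x u]) :
    dot3 (gaussMap x u) (gaussMap x u) = 1 := by
  have := norm3_pos (cross_ne h)
  simp only [gaussMap, dot3_smul_left, dot3_smul_right]
  rw [← norm3_sq]; field_simp

lemma gauss_orth (i : Fin 2) : dot3 (pd i x u) (gaussMap x u) = 0 := by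
  simp only [gaussMap, dot3_smul_right]
  have : dot3 (pd i x u) (crossProduct (pd 0 x u) (pd 1 x u)) = 0 := by
    rw [dot3_eq, cross_0, cross_1, cross_2]
    fin_cases i <;> simp <;> ring
  rw [this, mul_zero]

lemma fII_smooth (hx : ContDiffAt ℝ ∞ x u) (h : LinearIndependent ℝ ![pd 0 x u, pd 1 x u])
    (i j : Fin 2) : ContDiffAt ℝ ∞ (fun v => fformII x v i j) u :=
  contDiffAt_dot3 (contDiffAt_pd i (contDiffAt_pd j hx)) (gauss_smooth hx h)

lemma inv_entries (A : Matrix (Fin 2) (Fin 2) ℝ) :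
    A⁻¹ 0 0 = A.det⁻¹ * A 1 1 ∧ A⁻¹ 0 1 = -(A.det⁻¹ * A 0 1) ∧
    A⁻¹ 1 0 = -(A.det⁻¹ * A 1 0) ∧ A⁻¹ 1 1 = A.det⁻¹ * A 0 0 := by
  rw [Matrix.inv_def, Matrix.adjugate_fin_two, Ring.inverse_eq_inv']
  simp

lemma det_smooth (hx : ContDiffAt ℝ ∞ x u) (h : LinearIndependent ℝ ![pd 0 x u, pd 1 x u]) :
    ContDiffAt ℝ ∞ (fun v => (fformII x v).det) u := by
  simp only [Matrix.det_fin_two]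
  have := fII_smooth hx h
  exact ((this 0 0).mul (this 1 1)).sub ((this 0 1).mul (this 1 0))

lemma coef_smooth (hx : ContDiffAt ℝ ∞ x u) (h : LinearIndependent ℝ ![pd 0 x u, pd 1 x u])
    (hp : (fformII x u).PosDef) (i j : Fin 2) :
    ContDiffAt ℝ ∞ (fun v => Real.sqrt |(fformII x v).det| * (fformII x v)⁻¹ i j) u := by
  have hd := det_smooth hx h
  have hb := fII_smooth hx h
  have hpos := hp.det_pos
  have h1 : ContDiffAt ℝ ∞ (fun v => Real.sqrt |(fformII x v).det|) u :=
    (hd.abs hpos.ne').sqrt (abs_pos.2 hpos.ne').ne'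
  have h2 : ContDiffAt ℝ ∞ (fun v => (fformII x v).det⁻¹) u := hd.inv hpos.ne'
  refine h1.mul ?_
  fin_cases i <;> fin_cases j
  · exact (h2.mul (hb 1 1)).congr_of_eventuallyEq (.of_forall fun v => (inv_entries _).1)
  · exact (h2.mul (hb 0 1)).neg.congr_of_eventuallyEq (.of_forall fun v => (inv_entries _).2.1)
  · exact (h2.mul (hb 1 0)).neg.congr_of_eventuallyEq (.of_forall fun v => (inv_entries _).2.2.1)
  · exact (h2.mul (hb 0 0)).congr_of_eventuallyEq (.of_forall fun v => (inv_entries _).2.2.2)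

lemma fII_symm (hx : ContDiffAt ℝ ∞ x u) : fformII x u 1 0 = fformII x u 0 1 := by
  simp only [fformII, Matrix.of_apply]; rw [pd_symm 1 0 hx]

/-- normal component of `Δ^{II} x`. -/
lemma beltrami_normal (hx : ContDiffAt ℝ ∞ x u) (h : LinearIndependent ℝ ![pd 0 x u, pd 1 x u])
    (hp : (fformII x u).PosDef) :
    dot3 (beltrami2 (fformII x) x u) (gaussMap x u) = -2 := by
  have hpos := hp.det_pos
  have hterm : ∀ i j, dot3 (pd i (fun v => (Real.sqrt |(fformII x v).det| * (fformII x v)⁻¹ i j)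
      • pd j x v) u) (gaussMap x u) =
      Real.sqrt |(fformII x u).det| * (fformII x u)⁻¹ i j * fformII x u i j := by
    intro i j
    rw [pd_smul i ((coef_smooth hx h hp i j).differentiableAt (by simp))
      ((contDiffAt_pd j hx).differentiableAt (by simp)), dot3_add_left, dot3_smul_left,
      dot3_smul_left, gauss_orth]
    simp [fformII]
  have hs : 0 < Real.sqrt |(fformII x u).det| := Real.sqrt_pos.2 (abs_pos.2 hpos.ne')
  simp only [beltrami2, Fin.sum_univ_two, dot3_neg_left, dot3_smul_left, dot3_add_left, hterm]
  obtain ⟨e1, e2, e3, e4⟩ := inv_entries (fformII x u)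
  rw [e1, e2, e3, e4, fII_symm hx]
  have hdet := Matrix.det_fin_two (fformII x u)
  rw [fII_symm hx] at hdet
  set d := (fformII x u).det
  generalize Real.sqrt |d| = w at *
  field_simp
  linear_combination 2 * hdet
end pt

section main
variable {U : Set Param} {x : Param → Vec3}

lemma fII_weingarten (hU : IsOpen U) (hx : ∀ u ∈ U, ContDiffAt ℝ ∞ x u) (himm : Immersed x U)
    {u : Param} (hu : u ∈ U) (i j : Fin 2) :
    fformII x u i j = - dot3 (pd j x u) (pd i (gaussMap x) u) := by
  have h1 : pds i (fun v => dot3 (pd j x v) (gaussMap x v)) u = 0 := by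
    rw [pds_congr i hU (g := fun _ => 0) (fun v _ => gauss_orth j) hu, pds_const]
  rw [pds_dot3 i ((contDiffAt_pd j (hx u hu)).differentiableAt (by simp))
    ((gauss_smooth (hx u hu) (himm u hu)).differentiableAt (by simp))] at h1
  simp only [fformII, Matrix.of_apply]
  linarith

lemma dot_cross_cross (a b c d : Vec3) : dot3 (crossProduct a b) (crossProduct c d) =
    dot3 a c * dot3 b d - dot3 a d * dot3 b c := by
  simp only [dot3_eq, cross_0, cross_1, cross_2]; ring

/-- A vector orthogonal to `a`, `b` is parallel to `a × b`. -/
lemma parallel {a b y : Vec3} (ha : dot3 y a = 0) (hb : dot3 y b = 0) :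
    dot3 (crossProduct a b) (crossProduct a b) • y =
      dot3 y (crossProduct a b) • crossProduct a b := by
  rw [dot3_eq] at ha hb
  ext k
  fin_cases k
  · simp only [Pi.smul_apply, smul_eq_mul, dot3_eq, Fin.zero_eta, cross_0, cross_1, cross_2]
    linear_combination (-1) * ((a 2 * b 0 - a 0 * b 2) * b 2 - (a 0 * b 1 - a 1 * b 0) * b 1) * ha
      - (-(a 2 * b 0 - a 0 * b 2) * a 2 + (a 0 * b 1 - a 1 * b 0) * a 1) * hb
  · simp only [Pi.smul_apply, smul_eq_mul, dot3_eq, Fin.mk_one, cross_0, cross_1, cross_2]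
    linear_combination (-1) * ((a 0 * b 1 - a 1 * b 0) * b 0 - (a 1 * b 2 - a 2 * b 1) * b 2) * ha
      - (-(a 0 * b 1 - a 1 * b 0) * a 0 + (a 1 * b 2 - a 2 * b 1) * a 2) * hb
  · simp only [Pi.smul_apply, smul_eq_mul, dot3_eq, Fin.reduceFinMk, cross_0, cross_1, cross_2]
    linear_combination (-1) * ((a 1 * b 2 - a 2 * b 1) * b 1 - (a 2 * b 0 - a 0 * b 2) * b 0) * ha
      - (-(a 1 * b 2 - a 2 * b 1) * a 1 + (a 2 * b 0 - a 0 * b 2) * a 0) * hb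

lemma parallel_unit {a b y n : Vec3} (ha : dot3 y a = 0) (hb : dot3 y b = 0)
    (hna : dot3 n a = 0) (hnb : dot3 n b = 0) (hn : dot3 n n = 1)
    (hv : crossProduct a b ≠ 0) : y = dot3 y n • n := by
  have h1 := parallel ha hb
  have h2 := parallel hna hnb
  have hp := dot3_self_pos hv
  generalize crossProduct a b = v at *
  have hy : y = (dot3 y v / dot3 v v) • v := by
    rw [div_eq_inv_mul, mul_smul, ← h1, smul_smul, inv_mul_cancel₀ hp.ne', one_smul]
  have hn' : n = (dot3 n v / dot3 v v) • v := by
    rw [div_eq_inv_mul, mul_smul, ← h2, smul_smul, inv_mul_cancel₀ hp.ne', one_smul]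
  generalize dot3 y v / dot3 v v = s at *
  generalize dot3 n v / dot3 v v = t at *
  subst hy hn'
  simp only [dot3_smul_left, dot3_smul_right] at *
  rw [smul_smul]
  congr 1
  linear_combination (-s) * hn

lemma forward (hU : IsOpen U) (hne : U.Nonempty) (hx : ∀ u ∈ U, ContDiffAt ℝ ∞ x u)
    (himm : Immersed x U)
    (hell : ∀ u ∈ U, (fformII x u).PosDef) (lam : ℝ) (hl : lam ≠ 0)
    (hb : ∀ u ∈ U, beltrami2 (fformII x) x u = lam • x u) :
    (∃ r : ℝ, 0 < r ∧ (∀ u ∈ U, norm3 (x u) = r) ∧ lam = 2 / r ∧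
        (∀ u ∈ U, gaussMap x u = -(r⁻¹ • x u))) ∧
      (∃ c : ℝ, ∀ u ∈ U, gaussCurv x u = c) := by
  have dx : ∀ u ∈ U, DifferentiableAt ℝ x u := fun u hu => (hx u hu).differentiableAt (by simp)
  have dn : ∀ u ∈ U, DifferentiableAt ℝ (gaussMap x) u := fun u hu =>
    (gauss_smooth (hx u hu) (himm u hu)).differentiableAt (by simp)
  have hsupp : ∀ u ∈ U, dot3 (x u) (gaussMap x u) = -(2 / lam) := by
    intro u hu
    have := beltrami_normal (hx u hu) (himm u hu) (hell u hu)
    rw [hb u hu, dot3_smul_left] at this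
    field_simp; linarith
  have horth : ∀ u ∈ U, ∀ i, dot3 (x u) (pd i (gaussMap x) u) = 0 := by
    intro u hu i
    have h1 := pds_congr i hU (g := fun _ => -(2 / lam)) hsupp hu
    rw [pds_const, pds_dot3 i (dx u hu) (dn u hu), gauss_orth] at h1
    linarith
  have hnn : ∀ u ∈ U, ∀ i, dot3 (gaussMap x u) (pd i (gaussMap x) u) = 0 := by
    intro u hu i
    have h1 := pds_congr i hU (g := fun _ => (1 : ℝ)) (fun v hv => gauss_unit (himm v hv)) hu
    rw [pds_const, pds_dot3 i (dn u hu) (dn u hu), dot3_comm (pd i (gaussMap x) u)] at h1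
    linarith
  have hxn : ∀ u ∈ U, x u = (-(2 / lam)) • gaussMap x u := by
    intro u hu
    rw [← hsupp u hu]
    refine parallel_unit (horth u hu 0) (horth u hu 1) (hnn u hu 0) (hnn u hu 1)
      (gauss_unit (himm u hu)) ?_
    intro h0
    have := dot_cross_cross (pd 0 x u) (pd 1 x u) (pd 0 (gaussMap x) u) (pd 1 (gaussMap x) u)
    rw [h0] at this
    have hd := (hell u hu).det_pos
    rw [Matrix.det_fin_two] at hd
    simp only [fII_weingarten hU hx himm hu] at hd
    simp only [dot3_eq _ 0, Pi.zero_apply, mul_zero, add_zero] at this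
    nlinarith
  have hxi : ∀ u ∈ U, ∀ i, pd i x u = (-(2 / lam)) • pd i (gaussMap x) u := by
    intro u hu i
    rw [pd_congr i hU hxn hu, pd_const_smul i _ (dn u hu)]
  have hbg : ∀ u ∈ U, ∀ i j, fformII x u i j = lam / 2 * fformI x u i j := by
    intro u hu i j
    rw [fII_weingarten hU hx himm hu]
    simp only [fformI, Matrix.of_apply]
    rw [hxi u hu i, dot3_smul_left, dot3_comm]
    field_simp
  have hlpos : 0 < lam := by
    obtain ⟨u, hu⟩ := hne
    have h1 : 0 < fformII x u 0 0 := (hell u hu).diag_pos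
    rw [hbg u hu] at h1
    have h2 : 0 ≤ fformI x u 0 0 := by
      simp only [fformI, Matrix.of_apply]; rw [← norm3_sq]; positivity
    by_contra hc
    nlinarith
  refine ⟨⟨2 / lam, by positivity, ?_, by field_simp, ?_⟩, lam ^ 2 / 4, ?_⟩
  · intro u hu
    rw [norm3, hxn u hu, dot3_smul_left, dot3_smul_right, gauss_unit (himm u hu)]
    rw [show -(2 / lam) * (-(2 / lam) * 1) = (2 / lam) ^ 2 by ring]
    exact Real.sqrt_sq (by positivity)
  · intro u hu
    conv_rhs => rw [hxn u hu]
    rw [smul_smul, ← neg_smul]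
    field_simp
    simp
  · intro u hu
    have hd := (hell u hu).det_pos
    have : (fformII x u).det = lam ^ 2 / 4 * (fformI x u).det := by
      simp only [Matrix.det_fin_two, hbg u hu]; ring
    rw [gaussCurv, this]
    rw [this] at hd
    have : (fformI x u).det ≠ 0 := by rintro h; simp [h] at hd
    field_simp

lemma backward (hU : IsOpen U) (hx : ∀ u ∈ U, ContDiffAt ℝ ∞ x u)
    (himm : Immersed x U)
    (hell : ∀ u ∈ U, (fformII x u).PosDef) (r : ℝ) (hr : 0 < r)
    (hn : ∀ u ∈ U, norm3 (x u) = r) :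
    ∀ u ∈ U, beltrami2 (fformII x) x u = (2 / r) • x u := by
  have dx : ∀ u ∈ U, DifferentiableAt ℝ x u := fun u hu => (hx u hu).differentiableAt (by simp)
  have dxi : ∀ u ∈ U, ∀ i, DifferentiableAt ℝ (pd i x) u := fun u hu i =>
    (contDiffAt_pd i (hx u hu)).differentiableAt (by simp)
  have hxx : ∀ u ∈ U, dot3 (x u) (x u) = r ^ 2 := fun u hu => by rw [← norm3_sq, hn u hu]
  have hxi : ∀ u ∈ U, ∀ i, dot3 (x u) (pd i x u) = 0 := by
    intro u hu i
    have h1 := pds_congr i hU hxx hu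
    rw [pds_const, pds_dot3 i (dx u hu) (dx u hu), dot3_comm (pd i x u)] at h1
    linarith
  have hxij : ∀ u ∈ U, ∀ i j, dot3 (x u) (pd i (pd j x) u) = - fformI x u i j := by
    intro u hu i j
    have h1 := pds_congr i hU (fun v hv => hxi v hv j) hu
    rw [pds_const, pds_dot3 i (dx u hu) (dxi u hu j)] at h1
    simp only [fformI, Matrix.of_apply]
    linarith
  have hxn : ∀ u ∈ U, gaussMap x u = -(r⁻¹ • x u) := by
    intro u hu
    have h1 := parallel_unit (hxi u hu 0) (hxi u hu 1)
      (by rw [dot3_comm]; exact gauss_orth 0) (by rw [dot3_comm]; exact gauss_orth 1)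
      (gauss_unit (himm u hu)) (cross_ne (himm u hu))
    generalize dot3 (x u) (gaussMap x u) = s at h1
    have h2 : s ^ 2 = r ^ 2 := by
      rw [← hxx u hu, h1, dot3_smul_left, dot3_smul_right, gauss_unit (himm u hu)]; ring
    have h3 : s * fformII x u 0 0 = - fformI x u 0 0 := by
      rw [← hxij u hu, h1, dot3_smul_left, dot3_comm]; rfl
    have h4 : 0 < fformII x u 0 0 := (hell u hu).diag_pos
    have h5 : 0 ≤ fformI x u 0 0 := by
      simp only [fformI, Matrix.of_apply]; rw [← norm3_sq]; positivity
    have h6 : s = -r := by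
      rcases sq_eq_sq_iff_eq_or_eq_neg.1 h2 with h | h
      · subst h; nlinarith [mul_pos hr h4]
      · exact h
    rw [h1, h6, smul_smul, ← neg_smul]
    field_simp
    simp
  have hbg : ∀ u ∈ U, ∀ i j, fformII x u i j = r⁻¹ * fformI x u i j := by
    intro u hu i j
    have := hxij u hu i j
    simp only [fformII, Matrix.of_apply]
    rw [hxn u hu, dot3_neg_right, dot3_smul_right, dot3_comm, this]; ring
  have hw : ∀ u ∈ U, Real.sqrt |(fformII x u).det| =
      r⁻¹ * norm3 (crossProduct (pd 0 x u) (pd 1 x u)) := by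
    intro u hu
    have hpos := norm3_pos (cross_ne (himm u hu))
    have : (fformII x u).det = (r⁻¹ * norm3 (crossProduct (pd 0 x u) (pd 1 x u))) ^ 2 := by
      rw [mul_pow, norm3_sq, dot_cross_cross, Matrix.det_fin_two]
      simp only [hbg u hu, fformI, Matrix.of_apply]; ring
    rw [this, abs_of_nonneg (by positivity), Real.sqrt_sq (by positivity)]
  have hN : ∀ u ∈ U, crossProduct (pd 0 x u) (pd 1 x u) =
      (-(norm3 (crossProduct (pd 0 x u) (pd 1 x u)) * r⁻¹)) • x u := by
    intro u hu
    have hpos := norm3_pos (cross_ne (himm u hu))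
    have h1 := hxn u hu
    rw [gaussMap] at h1
    rw [neg_smul, mul_smul, ← smul_neg, ← h1, smul_smul, mul_inv_cancel₀ hpos.ne', one_smul]
  have hdet : ∀ u ∈ U, (fformII x u).det⁻¹ = (Real.sqrt |(fformII x u).det| ^ 2)⁻¹ := by
    intro u hu
    rw [Real.sq_sqrt (abs_nonneg _), abs_of_pos (hell u hu).det_pos]
  have f0 : ∀ u ∈ U, (Real.sqrt |(fformII x u).det| * (fformII x u)⁻¹ 0 0) • pd 0 x u +
      (Real.sqrt |(fformII x u).det| * (fformII x u)⁻¹ 0 1) • pd 1 x u =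
      (-r⁻¹) • crossProduct (pd 1 x u) (x u) := by
    intro u hu
    have hpos := norm3_pos (cross_ne (himm u hu))
    obtain ⟨e1, e2, e3, e4⟩ := inv_entries (fformII x u)
    have h1 : crossProduct (pd 1 x u) (crossProduct (pd 0 x u) (pd 1 x u)) =
        fformI x u 1 1 • pd 0 x u - fformI x u 0 1 • pd 1 x u := by
      simp only [fformI, Matrix.of_apply]
      ext k
      fin_cases k <;> simp [dot3_eq, cross_apply] <;> ring
    rw [hN u hu, map_smul] at h1
    rw [e1, e2, hdet u hu, hw u hu, hbg u hu, hbg u hu]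
    generalize norm3 (crossProduct (pd 0 x u) (pd 1 x u)) = w at *
    have h2 : crossProduct (pd 1 x u) (x u) =
        (-(w * r⁻¹))⁻¹ • (fformI x u 1 1 • pd 0 x u - fformI x u 0 1 • pd 1 x u) := by
      rw [← h1, smul_smul, inv_mul_cancel₀ (by have := mul_pos hpos (inv_pos.2 hr); linarith),
        one_smul]
    rw [h2]
    ext k
    simp only [Pi.add_apply, Pi.smul_apply, Pi.sub_apply, smul_eq_mul]
    field_simp
    ring
  have f1 : ∀ u ∈ U, (Real.sqrt |(fformII x u).det| * (fformII x u)⁻¹ 1 0) • pd 0 x u +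
      (Real.sqrt |(fformII x u).det| * (fformII x u)⁻¹ 1 1) • pd 1 x u =
      r⁻¹ • crossProduct (pd 0 x u) (x u) := by
    intro u hu
    have hpos := norm3_pos (cross_ne (himm u hu))
    obtain ⟨e1, e2, e3, e4⟩ := inv_entries (fformII x u)
    have h1 : crossProduct (pd 0 x u) (crossProduct (pd 0 x u) (pd 1 x u)) =
        fformI x u 1 0 • pd 0 x u - fformI x u 0 0 • pd 1 x u := by
      simp only [fformI, Matrix.of_apply]
      ext k
      fin_cases k <;> simp [dot3_eq, cross_apply] <;> ring
    rw [hN u hu, map_smul] at h1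
    rw [e3, e4, hdet u hu, hw u hu, hbg u hu, hbg u hu]
    generalize norm3 (crossProduct (pd 0 x u) (pd 1 x u)) = w at *
    have h2 : crossProduct (pd 0 x u) (x u) =
        (-(w * r⁻¹))⁻¹ • (fformI x u 1 0 • pd 0 x u - fformI x u 0 0 • pd 1 x u) := by
      rw [← h1, smul_smul, inv_mul_cancel₀ (by have := mul_pos hpos (inv_pos.2 hr); linarith),
        one_smul]
    rw [h2]
    ext k
    simp only [Pi.add_apply, Pi.smul_apply, Pi.sub_apply, smul_eq_mul]
    field_simp
    ring
  intro u hu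
  have hpos := norm3_pos (cross_ne (himm u hu))
  have hdiff : ∀ i j, DifferentiableAt ℝ (fun v => (Real.sqrt |(fformII x v).det| *
      (fformII x v)⁻¹ i j) • pd j x v) u := fun i j =>
    ((coef_smooth (hx u hu) (himm u hu) (hell u hu) i j).differentiableAt (by simp)).smul
      (dxi u hu j)
  have c0 := contDiffAt_pd 0 (hx u hu)
  have c1 := contDiffAt_pd 1 (hx u hu)
  have k0 := pd_congr 0 hU f0 hu
  have k1 := pd_congr 1 hU f1 hu
  rw [pd_add 0 (hdiff 0 0) (hdiff 0 1), pd_const_smul 0 _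
    ((contDiffAt_cross c1 (hx u hu)).differentiableAt (by simp)), pd_cross 0 c1 (hx u hu)] at k0
  rw [pd_add 1 (hdiff 1 0) (hdiff 1 1), pd_const_smul 1 _
    ((contDiffAt_cross c0 (hx u hu)).differentiableAt (by simp)), pd_cross 1 c0 (hx u hu)] at k1
  simp only [beltrami2, Fin.sum_univ_two]
  rw [k0, k1, pd_symm 1 0 (hx u hu), hw u hu, ← cross_anticomm (pd 0 x u) (pd 1 x u)]
  have hNu := hN u hu
  generalize norm3 (crossProduct (pd 0 x u) (pd 1 x u)) = w at *
  rw [hNu]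
  ext k
  simp only [Pi.add_apply, Pi.smul_apply, Pi.neg_apply, smul_eq_mul]
  field_simp
  ring
end main

/-- Theorem 2.1: `Δ^{II} x = λ x` on `U` for some `λ ≠ 0` iff `M` is part
of a sphere centered at the origin; moreover in that case necessarily `λ = 2/r`,
`n = −x/r`, and the Gauss curvature is constant on `U`. -/
theorem stmt11 (U : Set Param) (x : Param → Vec3)
    (hU : IsOpen U) (hUconn : IsConnected U)
    (hx : ContDiffOn ℝ (⊤ : ℕ∞) x U) (himm : Immersed x U)
    (hell : ∀ u ∈ U, (fformII x u).PosDef) :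
    ((∃ lam : ℝ, lam ≠ 0 ∧ ∀ u ∈ U, beltrami2 (fformII x) x u = lam • x u) ↔
      (∃ r : ℝ, 0 < r ∧ ∀ u ∈ U, norm3 (x u) = r)) ∧
    (∀ lam : ℝ, lam ≠ 0 → (∀ u ∈ U, beltrami2 (fformII x) x u = lam • x u) →
      (∃ r : ℝ, 0 < r ∧ (∀ u ∈ U, norm3 (x u) = r) ∧ lam = 2 / r ∧
        (∀ u ∈ U, gaussMap x u = -(r⁻¹ • x u))) ∧
      (∃ c : ℝ, ∀ u ∈ U, gaussCurv x u = c)) := by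
  have hx' : ∀ u ∈ U, ContDiffAt ℝ ∞ x u := fun u hu => hx.contDiffAt (hU.mem_nhds hu)
  refine ⟨⟨?_, ?_⟩, ?_⟩
  · rintro ⟨lam, hl, hb⟩
    obtain ⟨⟨r, hr, h, -⟩, -⟩ := forward hU hUconn.nonempty hx' himm hell lam hl hb
    exact ⟨r, hr, h⟩
  · rintro ⟨r, hr, h⟩
    exact ⟨2 / r, by positivity, backward hU hx' himm hell r hr h⟩
  · intro lam hl hb
    exact forward hU hUconn.nonempty hx' himm hell lam hl hb
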